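/- Let n ≥ 5 and 2 ≤ k ≤ ⌊n/2⌋ be integers, let c be real and H > 0 real, and let m ≥ 1 be an integer. Suppose λ_1,…,λ_m and μ_1,…,μ_m are reals satisfying: k·λ_1 + (n−k)·μ_1 = nH; k·λ_α + (n−k)·μ_α = 0 for every 2 ≤ α ≤ m; α(n,k,H,c) = (n−1)c + nH·λ_1 − Σ_{α=1}^m λ_α²; and α(n,k,H,c) = (n−1)c + nH·μ_1 − Σ_{α=1}^m μ_α². Then λ_1 = H + (n−2k)·φ(k)·(c+H²)/(kH) and μ_1 = H − (n−2k)·φ(k)·(c+H²)/((n−k)H), where φ(k) := k(n−k)/(k(n−2k)+n(k−1)(n−k)). -/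

import Mathlib

noncomputable def phiK (n k : ℕ) : ℝ :=
  (k : ℝ) * ((n : ℝ) - (k : ℝ)) /
    ((k : ℝ) * ((n : ℝ) - 2 * (k : ℝ)) + (n : ℝ) * ((k : ℝ) - 1) * ((n : ℝ) - (k : ℝ)))

noncomputable def alphaF (n k : ℕ) (H c : ℝ) : ℝ :=
  ((n : ℝ) - 1 - ((n : ℝ) - 2) * phiK n k) * (c + H ^ 2)

/-!
Write `p = k` and `q = n - k`. The relations `p λ_α + q μ_α = 0` for `α ≠ 1` make `p² λ_α²` and
`q² μ_α²` equal, so in the combination of the two curvature equations with weights `p²` and `-q²`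
only the terms of index `1` survive. Since `p λ_1 + q μ_1 = n H`, what is left is `n` times a
linear equation for the deviation `p (λ_1 - H) = -q (μ_1 - H)`, with `φ` as a free parameter.
-/

section CommRing

variable {R ι : Type*} [CommRing R] [Fintype ι] {p q A H : R} {x y : ι → R} {i₀ : ι}

theorem sq_mul_sum_sq_sub_eq_of_forall_ne (h : ∀ i, i ≠ i₀ → p * x i + q * y i = 0) :
    p ^ 2 * ∑ i, x i ^ 2 - q ^ 2 * ∑ i, y i ^ 2 = p ^ 2 * x i₀ ^ 2 - q ^ 2 * y i₀ ^ 2 := by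
  rw [Finset.mul_sum, Finset.mul_sum, ← Finset.sum_sub_distrib]
  refine Fintype.sum_eq_single i₀ fun i hi => ?_
  linear_combination (p * x i - q * y i) * h i hi

theorem mul_weighted_deviation_eq [NoZeroDivisors R] (hpq : p + q ≠ 0)
    (hmean : p * x i₀ + q * y i₀ = (p + q) * H)
    (hzero : ∀ i, i ≠ i₀ → p * x i + q * y i = 0)
    (hx : A = (p + q) * H * x i₀ - ∑ i, x i ^ 2)
    (hy : A = (p + q) * H * y i₀ - ∑ i, y i ^ 2) :
    (p + q - 2) * H * (p * (x i₀ - H)) = (p - q) * (A - (p + q - 1) * H ^ 2) := by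
  have hcombined : (p ^ 2 - q ^ 2) * A =
      (p + q) * H * (p ^ 2 * x i₀ - q ^ 2 * y i₀) - (p ^ 2 * x i₀ ^ 2 - q ^ 2 * y i₀ ^ 2) := by
    linear_combination p ^ 2 * hx - q ^ 2 * hy - sq_mul_sum_sq_sub_eq_of_forall_ne hzero
  have hsq : p ^ 2 * x i₀ ^ 2 - q ^ 2 * y i₀ ^ 2 = (p + q) * H * (p * x i₀ - q * y i₀) := by
    linear_combination (p * x i₀ - q * y i₀) * hmean
  have hlinear : (p - q) * A = H * (p ^ 2 * x i₀ - q ^ 2 * y i₀) - H * (p * x i₀ - q * y i₀) := by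
    apply mul_left_cancel₀ hpq
    linear_combination hcombined - hsq
  linear_combination -hlinear + H * (q - 1) * hmean

end CommRing

theorem stmt_15_general {K ι : Type*} [Field K] [Fintype ι] {n k c H φ : K} {lam mu : ι → K}
    {i₀ : ι} (hn₀ : n ≠ 0) (hn₂ : n - 2 ≠ 0) (hk : k ≠ 0) (hnk : n - k ≠ 0) (hH : H ≠ 0)
    (hmean : k * lam i₀ + (n - k) * mu i₀ = n * H)
    (hzero : ∀ i, i ≠ i₀ → k * lam i + (n - k) * mu i = 0)
    (hlam : (n - 1 - (n - 2) * φ) * (c + H ^ 2) =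
      (n - 1) * c + n * H * lam i₀ - ∑ i, lam i ^ 2)
    (hmu : (n - 1 - (n - 2) * φ) * (c + H ^ 2) =
      (n - 1) * c + n * H * mu i₀ - ∑ i, mu i ^ 2) :
    lam i₀ = H + (n - 2 * k) * φ * (c + H ^ 2) / (k * H) ∧
    mu i₀ = H - (n - 2 * k) * φ * (c + H ^ 2) / ((n - k) * H) := by
  have hscaled := mul_weighted_deviation_eq (p := k) (q := n - k) (H := H)
    (A := (n - 1) * H ^ 2 - (n - 2) * φ * (c + H ^ 2)) (by simpa using hn₀)
    (by linear_combination hmean) hzero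
    (by linear_combination hlam) (by linear_combination hmu)
  have hlam_dev : (lam i₀ - H) * (k * H) = (n - 2 * k) * φ * (c + H ^ 2) := by
    apply mul_left_cancel₀ hn₂
    linear_combination hscaled
  have hmu_dev : (H - mu i₀) * ((n - k) * H) = (n - 2 * k) * φ * (c + H ^ 2) := by
    linear_combination hlam_dev - H * hmean
  constructor
  · rw [← hlam_dev, mul_div_cancel_right₀ _ (mul_ne_zero hk hH), add_sub_cancel]
  · rw [← hmu_dev, mul_div_cancel_right₀ _ (mul_ne_zero hnk hH), sub_sub_cancel]

theorem stmt_15 (n k m : ℕ) (hn : 5 ≤ n) (hk : 2 ≤ k) (hk' : k ≤ n / 2) (hm : 1 ≤ m)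
    (c H : ℝ) (hH : 0 < H) (lam mu : Fin m → ℝ)
    (h1 : (k : ℝ) * lam ⟨0, hm⟩ + ((n : ℝ) - (k : ℝ)) * mu ⟨0, hm⟩ = (n : ℝ) * H)
    (h2 : ∀ a : Fin m, (a : ℕ) ≠ 0 → (k : ℝ) * lam a + ((n : ℝ) - (k : ℝ)) * mu a = 0)
    (h3 : alphaF n k H c =
      ((n : ℝ) - 1) * c + (n : ℝ) * H * lam ⟨0, hm⟩ - ∑ a : Fin m, lam a ^ 2)
    (h4 : alphaF n k H c =
      ((n : ℝ) - 1) * c + (n : ℝ) * H * mu ⟨0, hm⟩ - ∑ a : Fin m, mu a ^ 2) :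
    lam ⟨0, hm⟩ = H + ((n : ℝ) - 2 * (k : ℝ)) * phiK n k * (c + H ^ 2) / ((k : ℝ) * H) ∧
    mu ⟨0, hm⟩ = H - ((n : ℝ) - 2 * (k : ℝ)) * phiK n k * (c + H ^ 2) /
      (((n : ℝ) - (k : ℝ)) * H) := by
  have hn₂ : (2 : ℝ) < n := by exact_mod_cast (by lia : 2 < n)
  have hkn : (k : ℝ) < n := by exact_mod_cast (by lia : k < n)
  exact stmt_15_general (by positivity) (sub_pos.2 hn₂).ne' (by positivity) (sub_pos.2 hkn).ne'
    hH.ne' h1 (fun a ha => h2 a fun h => ha (Fin.ext h)) h3 h4
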